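/- (2-Replacement lemma) Let G be a finite abelian group and p a prime dividing |G|. Write the p-Sylow subgroup of G as C_{p^{a_1}} ⊕ ⋯ ⊕ C_{p^{a_k}} with a_1 ≥ a_2 ≥ ⋯ ≥ a_k ≥ 1 (setting a_j = 0 for j > k), and suppose a_2 > a_3. Let a be an integer with a_3 + 1 ≤ a ≤ a_2, and suppose p is 2-small with respect to exp(G)/p^{a_1}. If S is a dense zero-sum free sequence over G, then S contains at least 2p − 2 elements of order p^a. -/

import Mathlib

/-- The cross number `k(S)` of a sequence (finite multiset) `S` over an additive group:
the sum, with multiplicity, of the reciprocals of the orders of its elements. -/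
noncomputable def crossNum {G : Type*} [AddCommGroup G] (S : Multiset G) : ℝ :=
  (S.map fun g => ((addOrderOf g : ℝ))⁻¹).sum

/-- `S` is zero-sum free: no nonempty sub-multiset of `S` has sum `0`. -/
def IsZeroSumFree {G : Type*} [AddCommGroup G] (S : Multiset G) : Prop :=
  ∀ T : Multiset G, T ≤ S → T ≠ 0 → T.sum ≠ 0

/-- The little cross number `k(G)`: the maximal cross number of a zero-sum free
sequence over `G`. -/
noncomputable def littleK (G : Type*) [AddCommGroup G] : ℝ :=
  sSup {x : ℝ | ∃ S : Multiset G, IsZeroSumFree S ∧ crossNum S = x}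

/-- A prime `p` is 2-small with respect to `n` (written `p ≺² n`) if `p ∤ n` and
`(2p+2)/(2p+1) > ∑_{d ∣ n} 1/d`. -/
def TwoSmall (p n : ℕ) : Prop :=
  ¬ p ∣ n ∧ ((2 * p + 2 : ℚ) / (2 * p + 1)) > ∑ d ∈ n.divisors, (1 : ℚ) / d

/-- A zero-sum free sequence `S` over `G` is dense if it has maximal cross number and,
among zero-sum free sequences of maximal cross number, minimal length. -/
def IsDense {G : Type*} [AddCommGroup G] (S : Multiset G) : Prop :=
  IsZeroSumFree S ∧ crossNum S = littleK G ∧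
    Multiset.card S =
      sInf {c : ℕ | ∃ T : Multiset G,
        IsZeroSumFree T ∧ crossNum T = littleK G ∧ Multiset.card T = c}


lemma exists_le_of_le_map {X Y : Type*} (f : X → Y) (s : Multiset X) :
    ∀ T : Multiset Y, T ≤ s.map f → ∃ R ≤ s, R.map f = T := by
  classical
  induction s using Multiset.induction_on with
  | empty => 
    intro T hT
    exact ⟨0, le_refl _, by simp at hT; simp [hT]⟩
  | cons x s ih =>
    intro T hT
    rw [Multiset.map_cons] at hT
    by_cases hx : f x ∈ T
    · obtain ⟨T', rfl⟩ := Multiset.exists_cons_of_mem hx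
      obtain ⟨R, hR, rfl⟩ := ih T' ((Multiset.cons_le_cons_iff _).1 hT)
      exact ⟨x ::ₘ R, (Multiset.cons_le_cons_iff _).2 hR, by simp⟩
    · obtain ⟨R, hR, rfl⟩ := ih T ((Multiset.le_cons_of_notMem hx).1 hT)
      exact ⟨R, hR.trans (Multiset.le_cons_self _ _), rfl⟩

lemma exists_le_card_eq {X : Type*} (s : Multiset X) (k : ℕ) (hk : k ≤ Multiset.card s) :
    ∃ t ≤ s, Multiset.card t = k := by
  have h : 0 < Multiset.card (Multiset.powersetCard k s) := by
    rw [Multiset.card_powersetCard]; exact Nat.choose_pos hk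
  obtain ⟨t, ht⟩ := Multiset.card_pos_iff_exists_mem.1 h
  exact ⟨t, (Multiset.mem_powersetCard.1 ht).1, (Multiset.mem_powersetCard.1 ht).2⟩

lemma exists_le_add {X : Type*} (A B T : Multiset X) (h : T ≤ A + B) :
    ∃ T₁ ≤ A, ∃ T₂ ≤ B, T = T₁ + T₂ := by
  classical
  refine ⟨T ∩ A, Multiset.inter_le_right, T - A, ?_, ?_⟩
  · rwa [Multiset.sub_le_iff_le_add, add_comm]
  · ext x
    simp only [Multiset.count_add, Multiset.count_inter, Multiset.count_sub]
    omega

lemma zsf_mono {G : Type*} [AddCommGroup G] {S T : Multiset G} (hS : IsZeroSumFree S)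
    (h : T ≤ S) : IsZeroSumFree T := fun R hR => hS R (hR.trans h)

lemma zsf_add {G Q : Type*} [AddCommGroup G] [AddCommGroup Q] (f : G →+ Q)
    (U V : Multiset G) (hU : IsZeroSumFree U) (hUf : ∀ u ∈ U, f u = 0)
    (hV : IsZeroSumFree (V.map f)) : IsZeroSumFree (U + V) := by
  intro T hT hT0 hs
  obtain ⟨T₁, h₁, T₂, h₂, rfl⟩ := exists_le_add _ _ _ hT
  have hz : T₂ = 0 := by
    by_contra hne
    refine hV (T₂.map f) (Multiset.map_le_map h₂) (by simpa using hne) ?_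
    have h0 : f (T₁.sum) = 0 := by
      rw [map_multiset_sum]
      apply Multiset.sum_eq_zero
      intro x hx
      obtain ⟨y, hy, rfl⟩ := Multiset.mem_map.1 hx
      exact hUf y (Multiset.mem_of_le h₁ hy)
    have := congrArg f hs
    rw [Multiset.sum_add, map_add, h0, zero_add, map_zero, map_multiset_sum] at this
    exact this
  subst hz
  rw [add_zero] at hs hT0
  exact hU _ h₁ hT0 hs

lemma zsf_merge {G : Type*} [AddCommGroup G] (U R : Multiset G) (hR : R ≠ 0)
    (h : IsZeroSumFree (U + R)) : IsZeroSumFree (U + {R.sum}) := by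
  intro T hT hT0 hs
  obtain ⟨T₁, h₁, T₂, h₂, rfl⟩ := exists_le_add _ _ _ hT
  rcases Multiset.le_singleton.1 h₂ with rfl | rfl
  · exact h T₁ (h₁.trans (Multiset.le_add_right _ _)) (by simpa using hT0) (by simpa using hs)
  · refine h (T₁ + R) (add_le_add h₁ le_rfl) ?_ (by simpa using hs)
    intro h0
    exact hR (Multiset.le_zero.1 (h0 ▸ Multiset.le_add_left R T₁))

/-- merged version of `R` -/
noncomputable def mrg {G : Type*} [AddCommGroup G] (R : Multiset G) : Multiset G :=
  open Classical in if R = 0 then 0 else {R.sum}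

lemma zsf_mrg {G : Type*} [AddCommGroup G] (U R : Multiset G) 
    (h : IsZeroSumFree (U + R)) : IsZeroSumFree (U + mrg R) := by
  unfold mrg
  split_ifs with h0
  · subst h0; exact h
  · exact zsf_merge U R h0 h

lemma zsf_mrg_sum {G ι : Type*} [AddCommGroup G] (R : ι → Multiset G) (D : Finset ι) :
    ∀ U : Multiset G, IsZeroSumFree (U + ∑ d ∈ D, R d) →
      IsZeroSumFree (U + ∑ d ∈ D, mrg (R d)) := by
  classical
  induction D using Finset.induction_on with
  | empty => intro U h; simpa using h
  | insert d D hd ih =>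
    intro U h
    rw [Finset.sum_insert hd] at h ⊢
    rw [← add_assoc] at h
    have := ih _ h
    rw [add_right_comm] at this
    have := zsf_mrg _ _ this
    rwa [add_right_comm, add_assoc] at this

lemma zsf_cast {m : ℕ} (M : Multiset ℕ) (hpos : ∀ x ∈ M, 0 < x) (hlt : M.sum < m) :
    IsZeroSumFree (M.map (fun x : ℕ => (x : ZMod m))) := by
  intro T hT hT0 hs
  obtain ⟨R, hR, rfl⟩ := exists_le_of_le_map _ _ _ hT
  have h1 : ((R.sum : ℕ) : ZMod m) = 0 := by
    rw [← hs]; exact map_multiset_sum (Nat.castAddMonoidHom (ZMod m)) R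
  rw [ZMod.natCast_eq_zero_iff] at h1
  have h2 : R.sum ≤ M.sum := by
    obtain ⟨C, rfl⟩ := Multiset.le_iff_exists_add.1 hR
    simp
  have h3 : R.sum = 0 := Nat.eq_zero_of_dvd_of_lt h1 (by omega)
  rw [Multiset.sum_eq_zero_iff] at h3
  apply hT0
  have : R = 0 := by
    apply Multiset.eq_zero_of_forall_notMem
    intro x hx
    have := hpos x (Multiset.mem_of_le hR hx)
    have := h3 x hx
    omega
  simp [this]

open AddMonoidAlgebra in
lemma prod_ne_zero_of_zsf {Q F : Type*} [AddCommGroup Q] [Field F] (S : Multiset Q)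
    (hS : IsZeroSumFree S) :
    (S.map (fun g => (1 : AddMonoidAlgebra F Q) - single g 1)).prod ≠ 0 := by
  have key : ∀ S : Multiset Q, ∀ h : Q,
      ((S.map (fun g => (1 : AddMonoidAlgebra F Q) - single g 1)).prod - 1).coeff h ≠ 0 →
      ∃ T ≤ S, T ≠ 0 ∧ T.sum = h := by
    intro S
    induction S using Multiset.induction_on with
    | empty => intro h hh; simp at hh
    | cons g S ih =>
      intro h hh
      set P := (S.map (fun g => (1 : AddMonoidAlgebra F Q) - single g 1)).prod with hP
      have e1 : ((g ::ₘ S).map (fun g => (1 : AddMonoidAlgebra F Q) - single g 1)).prod - 1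
          = (P - 1) - (single g 1 * (P - 1)) - single g 1 := by
        rw [Multiset.map_cons, Multiset.prod_cons, ← hP]; ring
      rw [e1] at hh
      by_cases h1 : (P - 1).coeff h = 0
      · by_cases h2 : (P - 1).coeff (-g + h) = 0
        · by_cases h3 : g = h
          · exact ⟨{g}, by simp, by simp, by simp [h3]⟩
          · exfalso; apply hh
            simp only [coeff_sub, Finsupp.sub_apply, coeff_single_mul_apply] at h1 h2 ⊢
            simp [h1, h2, h3]
        · obtain ⟨T, hT, hT0, hs⟩ := ih _ h2
          exact ⟨g ::ₘ T, (Multiset.cons_le_cons_iff _).2 hT, by simp, by simp [hs]⟩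
      · obtain ⟨T, hT, hT0, hs⟩ := ih _ h1
        exact ⟨T, hT.trans (Multiset.le_cons_self _ _), hT0, hs⟩
  intro h0
  obtain ⟨T, hT, hT0, hs⟩ := key S 0 (by rw [h0]; simp [one_def])
  exact hS T hT hT0 hs

open AddMonoidAlgebra in
theorem thmK {X Q ι : Type*} [AddCommGroup Q] [Fintype ι] (p : ℕ) (hp : p.Prime)
    (e : ι → Q) (α : ι → ℕ) (he : ∀ i, p ^ α i • e i = 0)
    (s : Multiset X) (f : X → Q) (w : X → ℕ)
    (hf : ∀ x ∈ s, ∃ n : ι → ℕ, f x = ∑ i, (n i * p ^ (α i - w x)) • e i)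
    (hz : IsZeroSumFree (s.map f)) :
    (s.map (fun x => ((p : ℝ) ^ (w x))⁻¹)).sum ≤ ∑ i, (1 - ((p : ℝ) ^ α i)⁻¹) := by
  classical
  have : Fact p.Prime := ⟨hp⟩
  have : CharP (AddMonoidAlgebra (ZMod p) Q) p :=
    charP_of_injective_algebraMap (algebraMap (ZMod p) (AddMonoidAlgebra (ZMod p) Q)).injective p
  have hp0 : (0 : ℝ) < p := by exact_mod_cast hp.pos
  let z : ι → AddMonoidAlgebra (ZMod p) Q := fun i => single (e i) 1 - 1
  let I : ℝ → Ideal (AddMonoidAlgebra (ZMod p) Q) := fun t =>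
    Ideal.span {y | ∃ u : ι → ℕ, t ≤ ∑ i, (u i : ℝ) * ((p : ℝ) ^ α i)⁻¹ ∧ y = ∏ i, z i ^ u i}
  have hmul : ∀ s t : ℝ, ∀ a ∈ I s, ∀ b ∈ I t, a * b ∈ I (s + t) := by
    intro s t a ha b hb
    have h1 : a * b ∈ I s * I t := Ideal.mul_mem_mul ha hb
    rw [Ideal.span_mul_span'] at h1
    refine Ideal.span_mono ?_ h1
    rintro _ ⟨_, ⟨u, hu, rfl⟩, _, ⟨v, hv, rfl⟩, rfl⟩
    refine ⟨u + v, ?_, ?_⟩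
    · simp only [Pi.add_apply, Nat.cast_add, add_mul, Finset.sum_add_distrib]
      linarith
    · simp [pow_add, Finset.prod_mul_distrib]
  have hone : ∀ i k, single (k • e i) 1 = (single (e i) 1 : AddMonoidAlgebra (ZMod p) Q) ^ k := by
    intro i k
    simp [single_pow]
  have hzp : ∀ i k, z i ^ p ^ k = single (p ^ k • e i) 1 - 1 := by
    intro i k
    simp only [z]
    rw [sub_pow_char_pow, one_pow, hone]
  have hgen : ∀ i w, (single (p ^ (α i - w) • e i) 1 - 1 : AddMonoidAlgebra (ZMod p) Q) ∈
      I ((p : ℝ) ^ w)⁻¹ := by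
    intro i w
    rw [← hzp]
    apply Ideal.subset_span
    refine ⟨Pi.single i (p ^ (α i - w)), ?_, ?_⟩
    · rw [Finset.sum_eq_single i]
      · simp only [Pi.single_eq_same, Nat.cast_pow]
        rw [← div_eq_mul_inv, le_div_iff₀ (by positivity), inv_mul_le_iff₀ (by positivity), ← pow_add]
        apply pow_le_pow_right₀
        · exact_mod_cast hp.one_le
        · omega
      · intro j _ hj; simp [hj]
      · simp
    · rw [Finset.prod_eq_single i]
      · simp
      · intro j _ hj; simp [hj]
      · simp
  -- closure
  have hadd : ∀ t (g h : Q), (single g 1 - 1 : AddMonoidAlgebra (ZMod p) Q) ∈ I t →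
      (single h 1 - 1 : AddMonoidAlgebra (ZMod p) Q) ∈ I t →
      (single (g + h) 1 - 1 : AddMonoidAlgebra (ZMod p) Q) ∈ I t := by
    intro t g h hg hh
    have : (single (g + h) 1 - 1 : AddMonoidAlgebra (ZMod p) Q) =
        single g 1 * (single h 1 - 1) + (single g 1 - 1) := by
      rw [mul_sub, single_mul_single]; simp
    rw [this]
    exact (I t).add_mem ((I t).mul_mem_left _ hh) hg
  have hzero : ∀ t, (single (0 : Q) 1 - 1 : AddMonoidAlgebra (ZMod p) Q) ∈ I t := by
    intro t
    rw [← one_def, sub_self]; exact (I t).zero_mem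
  have hnsmul : ∀ t (g : Q) (k : ℕ), (single g 1 - 1 : AddMonoidAlgebra (ZMod p) Q) ∈ I t →
      (single (k • g) 1 - 1 : AddMonoidAlgebra (ZMod p) Q) ∈ I t := by
    intro t g k hg
    induction k with
    | zero => rw [zero_smul]; exact hzero t
    | succ k ih => rw [succ_nsmul]; exact hadd _ _ _ ih hg
  have hsum : ∀ t (F : Finset ι) (g : ι → Q),
      (∀ i ∈ F, (single (g i) 1 - 1 : AddMonoidAlgebra (ZMod p) Q) ∈ I t) →
      (single (∑ i ∈ F, g i) 1 - 1 : AddMonoidAlgebra (ZMod p) Q) ∈ I t := by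
    intro t F g
    induction F using Finset.induction_on with
    | empty => intro _; rw [Finset.sum_empty]; exact hzero t
    | insert i F hi ih =>
      intro h
      rw [Finset.sum_insert hi]
      exact hadd _ _ _ (h _ (Finset.mem_insert_self _ _))
        (ih fun j hj => h j (Finset.mem_insert_of_mem hj))
  have hmem : ∀ x ∈ s, (1 - single (f x) 1 : AddMonoidAlgebra (ZMod p) Q) ∈
      I ((p : ℝ) ^ (w x))⁻¹ := by
    intro x hx
    rw [← neg_sub]
    apply (I _).neg_mem
    obtain ⟨n, hn⟩ := hf x hx
    rw [hn]
    apply hsum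
    intro i _
    rw [mul_smul]
    exact hnsmul _ _ _ (hgen i _)
  have hprod : ∀ s' : Multiset X, s' ≤ s →
      ((s'.map f).map (fun g => (1 : AddMonoidAlgebra (ZMod p) Q) - single g 1)).prod ∈
        I (s'.map (fun x => ((p : ℝ) ^ (w x))⁻¹)).sum := by
    intro s'
    induction s' using Multiset.induction_on with
    | empty =>
      intro _
      simp only [Multiset.map_zero, Multiset.prod_zero, Multiset.sum_zero]
      apply Ideal.subset_span
      exact ⟨0, by simp, by simp⟩
    | cons x s' ih =>
      intro h
      simp only [Multiset.map_cons, Multiset.prod_cons, Multiset.sum_cons]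
      exact hmul _ _ _ (hmem x (Multiset.mem_of_le h (Multiset.mem_cons_self _ _))) _
        (ih ((Multiset.le_cons_self _ _).trans h))
  by_contra hlt
  push Not at hlt
  apply prod_ne_zero_of_zsf (F := ZMod p) _ hz
  have h1 := hprod s le_rfl
  have h2 : I (s.map (fun x => ((p : ℝ) ^ (w x))⁻¹)).sum = ⊥ := by
    rw [eq_bot_iff, Ideal.span_le]
    rintro _ ⟨u, hu, rfl⟩
    have : ∃ i, p ^ α i ≤ u i := by
      by_contra hcon
      push Not at hcon
      have : ∑ i, (u i : ℝ) * ((p : ℝ) ^ α i)⁻¹ ≤ ∑ i, (1 - ((p : ℝ) ^ α i)⁻¹) := by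
        apply Finset.sum_le_sum
        intro i _
        have h3 : (u i : ℝ) + 1 ≤ (p : ℝ) ^ α i := by exact_mod_cast hcon i
        have h4 : (0 : ℝ) < (p : ℝ) ^ α i := by positivity
        have h5 : ((u i : ℝ) + 1) * ((p : ℝ) ^ α i)⁻¹ ≤ 1 := by
          rw [← div_eq_mul_inv, div_le_one h4]; exact h3
        linarith
      linarith
    obtain ⟨i, hi⟩ := this
    have hz0 : z i ^ u i = 0 := by
      obtain ⟨k, hk⟩ := Nat.exists_eq_add_of_le hi
      rw [hk, pow_add, hzp, he, ← one_def, sub_self, zero_mul]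
    exact Finset.prod_eq_zero (Finset.mem_univ i) hz0
  rw [h2] at h1
  exact h1

lemma exists_zero_of_not_zsf {X Q : Type*} [AddCommGroup Q] (s : Multiset X) (f : X → Q)
    (h : ¬ IsZeroSumFree (s.map f)) : ∃ R ≤ s, R ≠ 0 ∧ (R.map f).sum = 0 := by
  unfold IsZeroSumFree at h
  push Not at h
  obtain ⟨T, hT, hT0, hs⟩ := h
  obtain ⟨R, hR, rfl⟩ := exists_le_of_le_map _ _ _ hT
  exact ⟨R, hR, by rintro rfl; simp at hT0, hs⟩

lemma davenport {X Q ι : Type*} [AddCommGroup Q] [Fintype ι] (p : ℕ) (hp : p.Prime)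
    (e : ι → Q) (he : ∀ i, p • e i = 0)
    (s : Multiset X) (f : X → Q)
    (hf : ∀ x ∈ s, ∃ n : ι → ℕ, f x = ∑ i, n i • e i)
    (hc : Fintype.card ι * (p - 1) < Multiset.card s) :
    ∃ R ≤ s, R ≠ 0 ∧ (R.map f).sum = 0 := by
  apply exists_zero_of_not_zsf
  intro hz
  have := thmK p hp e (fun _ => 1) (by simpa using he) s f (fun _ => 1)
    (by simpa using hf) hz
  simp only [pow_one, Multiset.map_const', Multiset.sum_replicate, Finset.sum_const,
    Finset.card_univ, nsmul_eq_mul] at this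
  have hp0 : (0 : ℝ) < p := by exact_mod_cast hp.pos
  have h2 : (Multiset.card s : ℝ) ≤ Fintype.card ι * ((p : ℝ) - 1) := by
    have := mul_le_mul_of_nonneg_right this hp0.le
    field_simp at this
    linarith
  have h3 : ((p - 1 : ℕ) : ℝ) = (p : ℝ) - 1 := by
    rw [Nat.cast_sub hp.one_le]; simp
  rw [← h3] at h2
  have : Multiset.card s ≤ Fintype.card ι * (p - 1) := by exact_mod_cast h2
  omega

lemma short1 {X Q : Type*} [AddCommGroup Q] (p : ℕ) (hp : p.Prime)
    (e : Q) (he : p • e = 0) (s : Multiset X) (f : X → Q)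
    (hf : ∀ x ∈ s, ∃ n : ℕ, f x = n • e) (hc : p ≤ Multiset.card s) :
    ∃ R ≤ s, R ≠ 0 ∧ Multiset.card R ≤ p ∧ (R.map f).sum = 0 := by
  obtain ⟨t, ht, htc⟩ := exists_le_card_eq s p hc
  obtain ⟨R, hR, h1, h2⟩ := davenport p hp (fun _ : Unit => e) (fun _ => he) t f
    (fun x hx => by
      obtain ⟨n, hn⟩ := hf x (Multiset.mem_of_le ht hx)
      exact ⟨fun _ => n, by simpa using hn⟩)
    (by have := hp.pos; simp; omega)
  exact ⟨R, hR.trans ht, h1, htc ▸ Multiset.card_le_card hR, h2⟩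

lemma short2 {X Q : Type*} [AddCommGroup Q] (p : ℕ) (hp : p.Prime)
    (e₁ e₂ : Q) (he₁ : p • e₁ = 0) (he₂ : p • e₂ = 0) (s : Multiset X) (f : X → Q)
    (hf : ∀ x ∈ s, ∃ n m : ℕ, f x = n • e₁ + m • e₂) (hc : 3 * p - 2 ≤ Multiset.card s) :
    ∃ R ≤ s, R ≠ 0 ∧ Multiset.card R ≤ p ∧ (R.map f).sum = 0 := by
  classical
  have hp2 := hp.two_le
  obtain ⟨t, ht, htc⟩ := exists_le_card_eq s (3 * p - 2) hc
  obtain ⟨R, hR, h1, h2⟩ := davenport p hp (![(e₁, 0), (e₂, 0), (0, 1)] : Fin 3 → Q × ZMod p)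
    (by intro i; fin_cases i <;> simp [he₁, he₂]) t (fun x => (f x, (1 : ZMod p)))
    (fun x hx => by
      obtain ⟨n, m, hn⟩ := hf x (Multiset.mem_of_le ht hx)
      refine ⟨![n, m, 1], ?_⟩
      simp [Fin.sum_univ_three, hn])
    (by simp; omega)
  have h3 : (R.map f).sum = 0 := by
    have := congrArg (AddMonoidHom.fst Q (ZMod p)) h2
    rw [map_multiset_sum, Multiset.map_map] at this
    simpa using this
  have h4 : p ∣ Multiset.card R := by
    have := congrArg (AddMonoidHom.snd Q (ZMod p)) h2
    rw [map_multiset_sum, Multiset.map_map] at this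
    rw [← ZMod.natCast_eq_zero_iff]
    simpa using this
  have h5 := Multiset.card_le_card hR
  have h6 : 0 < Multiset.card R := Multiset.card_pos.2 h1
  obtain ⟨q, hq⟩ := h4
  have hq3 : q < 3 := by
    by_contra h
    have : p * 3 ≤ p * q := Nat.mul_le_mul_left _ (by omega)
    omega
  have hq0 : q ≠ 0 := by rintro rfl; omega
  by_cases hq1 : q = 1
  · exact ⟨R, hR.trans ht, h1, by rw [hq, hq1, mul_one], h3⟩
  have hq2 : q = 2 := by omega
  subst hq2
  obtain ⟨t', ht', htc'⟩ := exists_le_card_eq R (2 * p - 1) (by omega)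
  obtain ⟨R', hR', h1', h2'⟩ := davenport p hp (![e₁, e₂] : Fin 2 → Q)
    (by intro i; fin_cases i <;> simp [he₁, he₂]) t' f
    (fun x hx => by
      obtain ⟨n, m, hn⟩ := hf x (Multiset.mem_of_le (ht'.trans (hR.trans ht)) hx)
      refine ⟨![n, m], ?_⟩
      simp [hn])
    (by simp; omega)
  have hle : R' ≤ R := hR'.trans ht'
  obtain ⟨C, rfl⟩ := Multiset.le_iff_exists_add.1 hle
  by_cases hcase : Multiset.card R' ≤ p
  · exact ⟨R', hle.trans (hR.trans ht), h1', hcase, h2'⟩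
  · have h7 := Multiset.card_le_card hR'
    rw [Multiset.card_add] at hq
    refine ⟨C, (Multiset.le_add_left _ _).trans (hR.trans ht), ?_, by omega, ?_⟩
    · rw [← Multiset.card_pos]; omega
    · rw [Multiset.map_add, Multiset.sum_add, h2', zero_add] at h3
      exact h3

section cross
variable {G : Type*} [AddCommGroup G]

lemma crossNum_add (A B : Multiset G) : crossNum (A + B) = crossNum A + crossNum B := by
  simp [crossNum]

lemma crossNum_zero : crossNum (0 : Multiset G) = 0 := by simp [crossNum]

lemma crossNum_singleton (g : G) : crossNum {g} = (addOrderOf g : ℝ)⁻¹ := by simp [crossNum]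

lemma crossNum_nonneg (A : Multiset G) : 0 ≤ crossNum A := by
  unfold crossNum
  apply Multiset.sum_nonneg
  intro x hx
  obtain ⟨y, _, rfl⟩ := Multiset.mem_map.1 hx
  positivity

lemma crossNum_sum {ι : Type*} (D : Finset ι) (f : ι → Multiset G) :
    crossNum (∑ d ∈ D, f d) = ∑ d ∈ D, crossNum (f d) := by
  classical
  induction D using Finset.induction_on with
  | empty => simp [crossNum_zero]
  | insert d D hd ih => rw [Finset.sum_insert hd, Finset.sum_insert hd, crossNum_add, ih]

lemma crossNum_const (A : Multiset G) (r : ℝ) (h : ∀ g ∈ A, (addOrderOf g : ℝ)⁻¹ = r) :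
    crossNum A = Multiset.card A * r := by
  unfold crossNum
  rw [Multiset.map_congr rfl h]
  simp

lemma zsf_bdd [Finite G] : BddAbove {x : ℝ | ∃ S : Multiset G, IsZeroSumFree S ∧ crossNum S = x} := by
  classical
  have := Fintype.ofFinite G
  refine ⟨∑ g : G, (addOrderOf g : ℝ), ?_⟩
  rintro _ ⟨S, hS, rfl⟩
  have h1 : crossNum S ≤ Multiset.card S := by
    unfold crossNum
    have : ∀ x ∈ S.map (fun g : G => (addOrderOf g : ℝ)⁻¹), x ≤ 1 := by
      intro x hx
      obtain ⟨g, _, rfl⟩ := Multiset.mem_map.1 hx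
      apply inv_le_one_of_one_le₀
      exact_mod_cast addOrderOf_pos g
    have := Multiset.sum_le_card_nsmul _ _ this
    simpa using this
  refine h1.trans ?_
  rw [← Multiset.sum_count_eq_card (s := Finset.univ) (fun _ _ => Finset.mem_univ _)]
  push_cast
  apply Finset.sum_le_sum
  intro g _
  by_contra hlt
  push Not at hlt
  have hlt' : addOrderOf g ≤ S.count g := by
    have : addOrderOf g < S.count g := by exact_mod_cast hlt
    omega
  refine hS (Multiset.replicate (addOrderOf g) g) (Multiset.le_count_iff_replicate_le.1 hlt') ?_ ?_
  · intro h
    have := congrArg Multiset.card h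
    simp at this
    exact (addOrderOf_pos g).ne' (by simpa using this)
  · simp [addOrderOf_nsmul_eq_zero]

lemma dense_max [Finite G] {S : Multiset G} (hS : IsDense S) (T : Multiset G)
    (hT : IsZeroSumFree T) : crossNum T ≤ crossNum S := by
  rw [hS.2.1]
  exact le_csSup zsf_bdd ⟨T, hT, rfl⟩

lemma dense_min [Finite G] {S : Multiset G} (hS : IsDense S) (T : Multiset G)
    (hT : IsZeroSumFree T) (h : crossNum S ≤ crossNum T) :
    Multiset.card S ≤ Multiset.card T := by
  rw [hS.2.2]
  apply Nat.sInf_le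
  exact ⟨T, hT, by rw [← hS.2.1]; exact le_antisymm (dense_max hS T hT) h, rfl⟩

/-- the `p`-adic valuation of the order -/
noncomputable def vv (p : ℕ) (g : G) : ℕ := (addOrderOf g).factorization p

/-- the prime-to-`p` part of the order -/
noncomputable def mm (p : ℕ) (g : G) : ℕ := addOrderOf g / p ^ vv p g

lemma ord_eq (p : ℕ) (g : G) : p ^ vv p g * mm p g = addOrderOf g :=
  Nat.ordProj_mul_ordCompl_eq_self _ _

lemma mm_coprime [Finite G] {p : ℕ} (hp : p.Prime) (g : G) : Nat.Coprime p (mm p g) :=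
  Nat.coprime_ordCompl hp (addOrderOf_pos g).ne'

lemma mm_pos [Finite G] {p : ℕ} (g : G) : 0 < mm p g := by
  rcases Nat.eq_zero_or_pos (mm p g) with h | h
  · have := ord_eq p g
    rw [h, mul_zero] at this
    exact absurd this (addOrderOf_pos g).ne
  · exact h

end cross

lemma zm1 (p a c : ℕ) (hp : p.Prime) (x : ZMod (p ^ a)) :
    p ^ c • x = 0 ↔ ∃ n : ℕ, x = ((n * p ^ (a - c) : ℕ) : ZMod (p ^ a)) := by
  have : NeZero (p ^ a) := ⟨(pow_pos hp.pos _).ne'⟩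
  constructor
  · intro h
    rw [← ZMod.natCast_zmod_val x, nsmul_eq_mul, ← Nat.cast_mul, ZMod.natCast_eq_zero_iff] at h
    have h2 : p ^ (a - c) ∣ x.val := by
      by_cases hac : a ≤ c
      · rw [Nat.sub_eq_zero_of_le hac]; simp
      · have : p ^ a = p ^ c * p ^ (a - c) := by rw [← pow_add]; congr 1; omega
        have h' : p ^ c * p ^ (a - c) ∣ p ^ c * x.val := by rw [← this]; exact h
        replace h := h'
        exact Nat.dvd_of_mul_dvd_mul_left (pow_pos hp.pos _) h
    obtain ⟨n, hn⟩ := h2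
    exact ⟨n, by rw [mul_comm, ← hn, ZMod.natCast_zmod_val]⟩
  · rintro ⟨n, rfl⟩
    rw [nsmul_eq_mul, ← Nat.cast_mul, ZMod.natCast_eq_zero_iff]
    have : p ^ a ∣ p ^ (c + (a - c)) := pow_dvd_pow _ (by omega)
    rw [pow_add] at this
    exact this.trans ⟨n, by ring⟩

/-- reduction map -/
noncomputable def red (p a c : ℕ) : ZMod (p ^ a) →+ ZMod (p ^ (a - c)) :=
  (ZMod.castHom (pow_dvd_pow p (Nat.sub_le a c)) (ZMod (p ^ (a - c)))).toAddMonoidHom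

lemma red_nat (p a c n : ℕ) : red p a c (n : ZMod (p ^ a)) = n := by
  simp only [red, RingHom.toAddMonoidHom_eq_coe, AddMonoidHom.coe_coe, map_natCast]

lemma red_eq_zero (p a c : ℕ) (hp : p.Prime) (x : ZMod (p ^ a)) :
    red p a c x = 0 ↔ p ^ c • x = 0 := by
  have : NeZero (p ^ a) := ⟨(pow_pos hp.pos _).ne'⟩
  rw [zm1 p a c hp]
  constructor
  · intro h
    rw [← ZMod.natCast_zmod_val x, red_nat, ZMod.natCast_eq_zero_iff] at h
    obtain ⟨n, hn⟩ := h
    exact ⟨n, by rw [mul_comm, ← hn, ZMod.natCast_zmod_val]⟩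
  · rintro ⟨n, rfl⟩
    rw [red_nat, ZMod.natCast_eq_zero_iff]
    exact ⟨n, by ring⟩

/-- structural data extracted from the decomposition -/
structure PData (G : Type*) [AddCommGroup G] (p a1 a2 a3 n : ℕ) where
  π1 : G →+ ZMod (p ^ a1)
  π2 : G →+ ZMod (p ^ a2)
  f1 : G
  f2 : G
  h11 : π1 f1 = 1
  h21 : π2 f1 = 0
  h22 : π2 f2 = 1
  hf1 : p ^ a1 • f1 = 0
  hf2 : p ^ a2 • f2 = 0
  ker : ∀ c, a3 ≤ c → ∀ g, (p ^ c • π1 g = 0 ∧ p ^ c • π2 g = 0) ↔ vv p g ≤ c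
  vle : ∀ g : G, vv p g ≤ a1
  hn : ∀ g : G, mm p g ∣ n
  h32 : a3 ≤ a2
  h12 : a2 ≤ a1

section pd
set_option linter.unusedSectionVars false
set_option autoImplicit false
variable {G : Type*} [AddCommGroup G] [Finite G] {p a1 a2 a3 n : ℕ}

/-- the first component -/
noncomputable def psi1 (P : PData G p a1 a2 a3 n) (c : ℕ) : G →+ ZMod (p ^ (a1 - c)) :=
  (red p a1 c).comp P.π1
/-- the second component -/
noncomputable def psi2 (P : PData G p a1 a2 a3 n) (c : ℕ) : G →+ ZMod (p ^ (a2 - c)) :=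
  (red p a2 c).comp P.π2
/-- the map to the quotient -/
noncomputable def psi (P : PData G p a1 a2 a3 n) (c : ℕ) :
    G →+ ZMod (p ^ (a1 - c)) × ZMod (p ^ (a2 - c)) := (psi1 P c).prod (psi2 P c)

lemma psi_eq_zero (hp : p.Prime) (P : PData G p a1 a2 a3 n) {c : ℕ} (hc : a3 ≤ c) (g : G) :
    psi P c g = 0 ↔ vv p g ≤ c := by
  rw [← P.ker c hc g, ← red_eq_zero p a1 c hp, ← red_eq_zero p a2 c hp]
  simp [psi, psi1, psi2, Prod.ext_iff]

lemma psi_form (hp : p.Prime) (P : PData G p a1 a2 a3 n) (c : ℕ) (g : G)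
    (hg : a3 ≤ vv p g) :
    ∃ k m : ℕ, psi1 P c g = (k * p ^ (a1 - vv p g) : ℕ) ∧ psi2 P c g = (m * p ^ (a2 - vv p g) : ℕ) := by
  have := (P.ker _ hg g).2 le_rfl
  obtain ⟨k, hk⟩ := (zm1 p a1 _ hp _).1 this.1
  obtain ⟨m, hm⟩ := (zm1 p a2 _ hp _).1 this.2
  refine ⟨k, m, ?_, ?_⟩
  · simp only [psi1, AddMonoidHom.comp_apply, hk, red_nat]
  · simp only [psi2, AddMonoidHom.comp_apply, hm, red_nat]

lemma ord_sum (hp : p.Prime) (P : PData G p a1 a2 a3 n) {c d : ℕ} (R : Multiset G)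
    (hR : ∀ x ∈ R, mm p x = d) (h : vv p R.sum ≤ c) (hd : R ≠ 0) :
    ((p : ℝ) ^ c * d)⁻¹ ≤ (addOrderOf R.sum : ℝ)⁻¹ := by
  have hz : (p ^ a1 * d) • R.sum = 0 := by
    change nsmulAddMonoidHom (p ^ a1 * d) R.sum = 0
    rw [map_multiset_sum]
    apply Multiset.sum_eq_zero
    intro x hx
    obtain ⟨y, hy, rfl⟩ := Multiset.mem_map.1 hx
    change (p ^ a1 * d) • y = 0
    rw [← addOrderOf_dvd_iff_nsmul_eq_zero, ← ord_eq p y, hR y hy]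
    exact Nat.mul_dvd_mul (pow_dvd_pow _ (P.vle y)) dvd_rfl
  rw [← addOrderOf_dvd_iff_nsmul_eq_zero, ← ord_eq p] at hz
  have h1 : mm p R.sum ∣ d := by
    have : mm p R.sum ∣ p ^ a1 * d := (Dvd.intro_left _ rfl).trans hz
    exact (Nat.Coprime.pow_left a1 (mm_coprime hp R.sum)).symm.dvd_of_dvd_mul_left this
  have hdpos : 0 < d := by
    obtain ⟨x, hx⟩ := Multiset.exists_mem_of_ne_zero hd
    rw [← hR x hx]; exact mm_pos x
  have h2 : addOrderOf R.sum ∣ p ^ c * d := by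
    rw [← ord_eq p]
    exact Nat.mul_dvd_mul (pow_dvd_pow _ h) h1
  have h3 := Nat.le_of_dvd (Nat.mul_pos (pow_pos hp.pos _) hdpos) h2
  apply inv_anti₀
  · exact_mod_cast addOrderOf_pos _
  · exact_mod_cast h3

lemma ord_inv (p : ℕ) (x : G) {l d : ℕ} (h1 : vv p x = l) (h2 : mm p x = d) :
    (addOrderOf x : ℝ)⁻¹ = ((p : ℝ) ^ l * d)⁻¹ := by
  rw [← ord_eq p x, h1, h2]; push_cast; rfl

lemma no_short (hp : p.Prime) (P : PData G p a1 a2 a3 n) {S : Multiset G} (hS : IsDense S)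
    {c d : ℕ} (hc : a3 ≤ c) (R : Multiset G) (hRS : R ≤ S)
    (hR : ∀ x ∈ R, vv p x = c + 1 ∧ mm p x = d) (hR0 : R ≠ 0) (hRp : Multiset.card R ≤ p)
    (hs : (R.map (psi P c)).sum = 0) : False := by
  have hp0 : (0 : ℝ) < p := by exact_mod_cast hp.pos
  rw [← map_multiset_sum, psi_eq_zero hp P hc] at hs
  obtain ⟨C, rfl⟩ := Multiset.le_iff_exists_add.1 hRS
  have hz := zsf_merge C R hR0 (by rw [add_comm]; exact hS.1)
  have hcard : 2 ≤ Multiset.card R := by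
    by_contra hlt
    have : Multiset.card R = 1 := by
      have := Multiset.card_pos.2 hR0
      omega
    obtain ⟨x, rfl⟩ := Multiset.card_eq_one.1 this
    have := (hR x (by simp)).1
    simp at hs
    omega
  have h1 := ord_sum hp P R (fun x hx => (hR x hx).2) hs hR0
  have hd : 0 < d := by
    obtain ⟨x, hx⟩ := Multiset.exists_mem_of_ne_zero hR0
    rw [← (hR x hx).2]; exact mm_pos x
  have hd' : (0 : ℝ) < d := by exact_mod_cast hd
  have h2 := crossNum_const R _ (fun x hx => ord_inv p x (hR x hx).1 (hR x hx).2)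
  have h3 : crossNum R ≤ ((p : ℝ) ^ c * d)⁻¹ := by
    rw [h2]
    have : (Multiset.card R : ℝ) ≤ p := by exact_mod_cast hRp
    calc _ ≤ (p : ℝ) * ((p : ℝ) ^ (c + 1) * d)⁻¹ := by gcongr
      _ = _ := by rw [pow_succ]; field_simp
  have h4 := dense_min hS _ hz (by
    rw [crossNum_add, crossNum_add, crossNum_singleton]; linarith)
  rw [Multiset.card_add, Multiset.card_add, Multiset.card_singleton] at h4
  omega

/-- the elements of `S` of order `p^l d` -/
noncomputable def lev (p : ℕ) (S : Multiset G) (l d : ℕ) : Multiset G :=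
  open Classical in S.filter (fun g => vv p g = l ∧ mm p g = d)

lemma mem_lev {S : Multiset G} {l d : ℕ} {x : G} :
    x ∈ lev p S l d ↔ x ∈ S ∧ vv p x = l ∧ mm p x = d := by
  simp [lev]

lemma lev_le {S : Multiset G} {l d : ℕ} : lev p S l d ≤ S := by
  unfold lev; exact Multiset.filter_le _ _

lemma levA (hp : p.Prime) (P : PData G p a1 a2 a3 n) {S : Multiset G} (hS : IsDense S)
    {c d : ℕ} (hc : a3 ≤ c) (hc2 : c + 1 ≤ a2) :
    Multiset.card (lev p S (c + 1) d) ≤ 3 * p - 3 := by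
  by_contra hlt
  have h12 := P.h12
  have hp2 := hp.two_le
  obtain ⟨R, hR, hR0, hRp, hs⟩ := short2 p hp
    (((p ^ (a1 - (c + 1)) : ℕ), 0) : ZMod (p ^ (a1 - c)) × ZMod (p ^ (a2 - c)))
    ((0, (p ^ (a2 - (c + 1)) : ℕ)) : ZMod (p ^ (a1 - c)) × ZMod (p ^ (a2 - c)))
    (by
      rw [Prod.smul_mk, smul_zero, nsmul_eq_mul, ← Nat.cast_mul, ← pow_succ',
        (ZMod.natCast_eq_zero_iff _ _).2 (pow_dvd_pow p (by omega))]; rfl)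
    (by
      rw [Prod.smul_mk, smul_zero, nsmul_eq_mul, ← Nat.cast_mul, ← pow_succ',
        (ZMod.natCast_eq_zero_iff _ _).2 (pow_dvd_pow p (by omega))]; rfl)
    (lev p S (c + 1) d) (psi P c)
    (by
      intro x hx
      have hv := (mem_lev.1 hx).2.1
      obtain ⟨k, m, hk, hm⟩ := psi_form hp P c x (by omega)
      rw [hv] at hk hm
      refine ⟨k, m, ?_⟩
      simp only [psi, AddMonoidHom.prod_apply, hk, hm]
      simp)
    (by omega)
  exact no_short hp P hS hc R (hR.trans lev_le)
    (fun x hx => (mem_lev.1 (Multiset.mem_of_le hR hx)).2) hR0 hRp hs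

lemma levB (hp : p.Prime) (P : PData G p a1 a2 a3 n) {S : Multiset G} (hS : IsDense S)
    {c d : ℕ} (hc2 : a2 ≤ c) (hc1 : c + 1 ≤ a1) :
    Multiset.card (lev p S (c + 1) d) ≤ p - 1 := by
  by_contra hlt
  have h32 := P.h32
  have hp2 := hp.two_le
  obtain ⟨R, hR, hR0, hRp, hs⟩ := short1 p hp
    (((p ^ (a1 - (c + 1)) : ℕ), 0) : ZMod (p ^ (a1 - c)) × ZMod (p ^ (a2 - c)))
    (by
      rw [Prod.smul_mk, smul_zero, nsmul_eq_mul, ← Nat.cast_mul, ← pow_succ',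
        (ZMod.natCast_eq_zero_iff _ _).2 (pow_dvd_pow p (by omega))]; rfl)
    (lev p S (c + 1) d) (psi P c)
    (by
      intro x hx
      have hv := (mem_lev.1 hx).2.1
      obtain ⟨k, m, hk, hm⟩ := psi_form hp P c x (by omega)
      rw [hv] at hk
      refine ⟨k, ?_⟩
      have hsub : psi2 P c x = 0 := by
        have : Subsingleton (ZMod (p ^ (a2 - c))) := by
          rw [Nat.sub_eq_zero_of_le hc2, pow_zero]; infer_instance
        exact Subsingleton.elim _ _
      simp only [psi, AddMonoidHom.prod_apply, hk, hsub]
      simp)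
    (by omega)
  exact no_short hp P hS (by omega) R (hR.trans lev_le)
    (fun x hx => (mem_lev.1 (Multiset.mem_of_le hR hx)).2) hR0 hRp hs

end pd

section oo
variable {G : Type*} [AddCommGroup G] [Finite G]

/-- standard optimal sequence -/
noncomputable def OO (p : ℕ) (f : G) (k : ℕ) : Multiset G :=
  ∑ i ∈ Finset.range k, Multiset.replicate (p - 1) (p ^ i • f)

lemma OO_cross {p : ℕ} (hp : p.Prime) (f : G) (a c : ℕ) (hf : p ^ a • f = 0) (hc : c ≤ a) :
    ((p : ℝ) ^ c)⁻¹ - ((p : ℝ) ^ a)⁻¹ ≤ crossNum (OO p f (a - c)) := by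
  have hp0 : (0 : ℝ) < p := by exact_mod_cast hp.pos
  have key : ∀ k, k ≤ a → ((p : ℝ) ^ k - 1) * ((p : ℝ) ^ a)⁻¹ ≤ crossNum (OO p f k) := by
    intro k
    induction k with
    | zero => intro _; simp [OO, crossNum_zero]
    | succ k ih =>
      intro hk
      have h1 := ih (by omega)
      have h2 : OO p f (k + 1) = OO p f k + Multiset.replicate (p - 1) (p ^ k • f) := by
        simp [OO, Finset.sum_range_succ]
      have h3 : addOrderOf (p ^ k • f) ≤ p ^ (a - k) := by
        apply addOrderOf_le_of_nsmul_eq_zero (pow_pos hp.pos _)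
        rw [← mul_smul, ← pow_add, Nat.sub_add_cancel (by omega), hf]
      have h4 : (p : ℝ) ^ k * ((p : ℝ) ^ a)⁻¹ ≤ (addOrderOf (p ^ k • f) : ℝ)⁻¹ := by
        have : (p : ℝ) ^ k * ((p : ℝ) ^ a)⁻¹ = ((p : ℝ) ^ (a - k))⁻¹ := by
          have : (p : ℝ) ^ a = (p : ℝ) ^ (a - k) * (p : ℝ) ^ k := by
            rw [← pow_add, Nat.sub_add_cancel (by omega)]
          rw [this]; field_simp
        rw [this]
        apply inv_anti₀
        · exact_mod_cast addOrderOf_pos _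
        · exact_mod_cast h3
      rw [h2, crossNum_add, crossNum_const (Multiset.replicate (p - 1) (p ^ k • f))
        ((addOrderOf (p ^ k • f) : ℝ)⁻¹) (fun g hg => by rw [Multiset.eq_of_mem_replicate hg]),
        Multiset.card_replicate, Nat.cast_sub hp.one_le]
      have h5 : (0 : ℝ) ≤ (p : ℝ) - 1 := by
        have : (1 : ℝ) ≤ p := by exact_mod_cast hp.one_le
        linarith
      have h6 := mul_le_mul_of_nonneg_left h4 h5
      rw [pow_succ]
      push_cast
      linarith
  have := key (a - c) (by omega)
  refine le_trans (le_of_eq ?_) this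
  have h : (p : ℝ) ^ a = (p : ℝ) ^ (a - c) * (p : ℝ) ^ c := by
    rw [← pow_add, Nat.sub_add_cancel (by omega)]
  rw [h]; field_simp

lemma OO_zsf {p : ℕ} (hp : p.Prime) (f : G) (k : ℕ) (φ : G →+ ZMod (p ^ k))
    (hφ : φ f = 1) : IsZeroSumFree ((OO p f k).map φ) := by
  have h1 : (OO p f k).map φ =
      (∑ i ∈ Finset.range k, Multiset.replicate (p - 1) (p ^ i)).map
        (fun x : ℕ => (x : ZMod (p ^ k))) := by
    unfold OO
    rw [← Multiset.coe_mapAddMonoidHom, ← Multiset.coe_mapAddMonoidHom, map_sum, map_sum]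
    apply Finset.sum_congr rfl
    intro i _
    simp [hφ]
  rw [h1]
  apply zsf_cast
  · intro x hx
    rw [Multiset.mem_sum] at hx
    obtain ⟨i, _, hi⟩ := hx
    rw [Multiset.eq_of_mem_replicate hi]
    exact pow_pos hp.pos _
  · have : ∀ k, (∑ i ∈ Finset.range k, Multiset.replicate (p - 1) (p ^ i)).sum + 1 = p ^ k := by
      intro k
      induction k with
      | zero => simp
      | succ k ih =>
        rw [Finset.sum_range_succ, Multiset.sum_add, Multiset.sum_replicate, add_right_comm, ih,
          smul_eq_mul, pow_succ]
        obtain ⟨q, rfl⟩ := Nat.exists_eq_add_of_le hp.one_le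
        simp only [Nat.add_sub_cancel_left]
        ring
    have := this k
    omega
end oo

section main
set_option linter.unusedSectionVars false
set_option autoImplicit false
variable {G : Type*} [AddCommGroup G] [Finite G] {p a1 a2 a3 n : ℕ}

/-- elements of `S` with `v > c` and prime-to-`p` part of the order equal to `d` -/
noncomputable def WW (p : ℕ) (S : Multiset G) (c d : ℕ) : Multiset G :=
  open Classical in S.filter (fun g => c < vv p g ∧ mm p g = d)

lemma mem_WW {S : Multiset G} {c d : ℕ} {x : G} :
    x ∈ WW p S c d ↔ x ∈ S ∧ c < vv p x ∧ mm p x = d := by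
  simp [WW]

lemma WW_succ (S : Multiset G) (c d : ℕ) : WW p S c d = lev p S (c + 1) d + WW p S (c + 1) d := by
  classical
  ext x
  simp only [WW, lev, Multiset.count_add, Multiset.count_filter]
  split_ifs <;> omega

lemma cross_WW_succ (S : Multiset G) (c d : ℕ) (hd : 0 < d) :
    crossNum (WW p S c d) * d =
      Multiset.card (lev p S (c + 1) d) * ((p : ℝ) ^ (c + 1))⁻¹ + crossNum (WW p S (c + 1) d) * d := by
  have hd' : (0 : ℝ) < d := by exact_mod_cast hd
  rw [WW_succ, crossNum_add, add_mul, crossNum_const (lev p S (c + 1) d) _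
    (fun x hx => ord_inv p x (mem_lev.1 hx).2.1 (mem_lev.1 hx).2.2), mul_inv]
  field_simp

lemma WW_top (P : PData G p a1 a2 a3 n) (S : Multiset G) (d : ℕ) : WW p S a1 d = 0 := by
  apply Multiset.eq_zero_of_forall_notMem
  intro x hx
  have := (mem_WW.1 hx).2.1
  have := P.vle x
  omega

lemma inv_pow_succ {p : ℕ} (hp : p.Prime) (c : ℕ) :
    ((p : ℝ) ^ c)⁻¹ = p * ((p : ℝ) ^ (c + 1))⁻¹ := by
  have hp0 : (0 : ℝ) < p := by exact_mod_cast hp.pos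
  rw [pow_succ]; field_simp

lemma topW (hp : p.Prime) (P : PData G p a1 a2 a3 n) {S : Multiset G} (hS : IsDense S)
    {d : ℕ} (hd : 0 < d) : ∀ k c, c + k = a1 → a2 ≤ c →
      crossNum (WW p S c d) * d ≤ ((p : ℝ) ^ c)⁻¹ - ((p : ℝ) ^ a1)⁻¹ := by
  intro k
  induction k with
  | zero =>
    intro c hc _
    obtain rfl : c = a1 := by omega
    rw [WW_top P, crossNum_zero]; simp
  | succ k ih =>
    intro c hc hc2
    have h1 := ih (c + 1) (by omega) (by omega)
    have h2 := levB hp P hS (d := d) hc2 (by omega)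
    have h3 : (Multiset.card (lev p S (c + 1) d) : ℝ) ≤ p - 1 := by
      have : Multiset.card (lev p S (c + 1) d) + 1 ≤ p := by have := hp.pos; omega
      have : (Multiset.card (lev p S (c + 1) d) : ℝ) + 1 ≤ p := by exact_mod_cast this
      linarith
    have h4 : (0 : ℝ) ≤ ((p : ℝ) ^ (c + 1))⁻¹ := by positivity
    rw [cross_WW_succ _ _ _ hd, inv_pow_succ hp c]
    nlinarith [mul_le_mul_of_nonneg_right h3 h4]

lemma levA' (hp : p.Prime) (P : PData G p a1 a2 a3 n) {S : Multiset G} (hS : IsDense S)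
    {c d : ℕ} (hc : a3 ≤ c) (hc2 : c + 1 ≤ a2) :
    Multiset.card (lev p S (c + 1) d) * ((p : ℝ) ^ (c + 1))⁻¹ ≤
      (3 * p - 3) * ((p : ℝ) ^ (c + 1))⁻¹ := by
  have h2 := levA hp P hS (d := d) hc hc2
  have h3 : (Multiset.card (lev p S (c + 1) d) : ℝ) ≤ 3 * p - 3 := by
    have : Multiset.card (lev p S (c + 1) d) + 3 ≤ 3 * p := by have := hp.pos; omega
    have : (Multiset.card (lev p S (c + 1) d) : ℝ) + 3 ≤ 3 * p := by exact_mod_cast this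
    linarith
  exact mul_le_mul_of_nonneg_right h3 (by positivity)

lemma bigW (hp : p.Prime) (P : PData G p a1 a2 a3 n) {S : Multiset G} (hS : IsDense S)
    {d : ℕ} (hd : 0 < d) : ∀ k c, c + k = a2 → a3 ≤ c →
      crossNum (WW p S c d) * d ≤
        3 * ((p : ℝ) ^ c)⁻¹ - 2 * ((p : ℝ) ^ a2)⁻¹ - ((p : ℝ) ^ a1)⁻¹ := by
  intro k
  induction k with
  | zero =>
    intro c hc _
    obtain rfl : c = a2 := by omega
    have h12 := P.h12
    have := topW hp P hS hd (a1 - c) c (by omega) le_rfl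
    linarith
  | succ k ih =>
    intro c hc hc2
    have h1 := ih (c + 1) (by omega) (by omega)
    have h3 := levA' hp P hS (d := d) hc2 (by omega)
    rw [cross_WW_succ _ _ _ hd, inv_pow_succ hp c]
    linarith

/-- the optimal cross number of the levels above `c` -/
noncomputable def kap (p a1 a2 c : ℕ) : ℝ :=
  2 * ((p : ℝ) ^ c)⁻¹ - ((p : ℝ) ^ a1)⁻¹ - ((p : ℝ) ^ a2)⁻¹

lemma zsfW (hp : p.Prime) (P : PData G p a1 a2 a3 n) {S : Multiset G}
    {c d : ℕ} (hd : 0 < d) (hc : a3 ≤ c) (hc2 : c ≤ a2)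
    (hz : IsZeroSumFree ((WW p S c d).map (psi P c))) :
    crossNum (WW p S c d) * d ≤ kap p a1 a2 c := by
  have hp0 : (0 : ℝ) < p := by exact_mod_cast hp.pos
  have hd' : (0 : ℝ) < d := by exact_mod_cast hd
  have h12 := P.h12
  have hK := thmK p hp
    (![(1, 0), (0, 1)] : Fin 2 → ZMod (p ^ (a1 - c)) × ZMod (p ^ (a2 - c)))
    ![a1 - c, a2 - c]
    (by
      intro i
      fin_cases i
      · have := ZMod.natCast_self (p ^ (a1 - c))
        push_cast at this
        simp [this]
      · have := ZMod.natCast_self (p ^ (a2 - c))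
        push_cast at this
        simp [this])
    (WW p S c d) (psi P c) (fun x => vv p x - c)
    (by
      intro x hx
      have hv := (mem_WW.1 hx).2.1
      obtain ⟨k, m, hk, hm⟩ := psi_form hp P c x (by omega)
      refine ⟨![k, m], ?_⟩
      have e1 : a1 - c - (vv p x - c) = a1 - vv p x := by omega
      have e2 : a2 - c - (vv p x - c) = a2 - vv p x := by omega
      simp only [psi, AddMonoidHom.prod_apply, hk, hm, Fin.sum_univ_two]
      simp [e1, e2])
    hz
  have h1 : crossNum (WW p S c d) * d =
      ((p : ℝ) ^ c)⁻¹ * ((WW p S c d).map (fun x => ((p : ℝ) ^ (vv p x - c))⁻¹)).sum := by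
    unfold crossNum
    rw [← Multiset.sum_map_mul_left, ← Multiset.sum_map_mul_right]
    congr 1
    apply Multiset.map_congr rfl
    intro x hx
    have hv := (mem_WW.1 hx).2
    rw [ord_inv p x rfl hv.2]
    have : (p : ℝ) ^ vv p x = (p : ℝ) ^ (vv p x - c) * (p : ℝ) ^ c := by
      rw [← pow_add, Nat.sub_add_cancel (by omega)]
    rw [this]; field_simp
  have e : ∀ a, c ≤ a → ((p : ℝ) ^ c)⁻¹ * ((p : ℝ) ^ (a - c))⁻¹ = ((p : ℝ) ^ a)⁻¹ := by
    intro a ha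
    rw [← mul_inv, ← pow_add]; congr 2; omega
  rw [h1]
  refine (mul_le_mul_of_nonneg_left hK (by positivity)).trans (le_of_eq ?_)
  simp only [Fin.sum_univ_two, Matrix.cons_val_zero, Matrix.cons_val_one]
  rw [kap, ← e a1 (by omega), ← e a2 hc2]
  ring

lemma cross_mrg (hp : p.Prime) (P : PData G p a1 a2 a3 n) {S : Multiset G}
    {c d : ℕ} (R : Multiset G) (hR : R ≤ WW p S c d) (hR0 : R ≠ 0) (hv : vv p R.sum ≤ c) :
    ((p : ℝ) ^ c * d)⁻¹ ≤ crossNum (mrg R) := by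
  unfold mrg
  rw [if_neg hR0, crossNum_singleton]
  exact ord_sum hp P R (fun x hx => (mem_WW.1 (Multiset.mem_of_le hR hx)).2.2) hv hR0

lemma loss (hp : p.Prime) (P : PData G p a1 a2 a3 n) {S : Multiset G} (hS : IsDense S)
    {c d : ℕ} (hd : 0 < d) (hc : a3 ≤ c) (hc2 : c ≤ a2) :
    ∃ R ≤ WW p S c d, (R = 0 ∨ vv p R.sum ≤ c) ∧
      crossNum (WW p S c d) ≤ crossNum (mrg R) + kap p a1 a2 c * (d : ℝ)⁻¹ := by
  have hp0 : (0 : ℝ) < p := by exact_mod_cast hp.pos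
  have hd' : (0 : ℝ) < d := by exact_mod_cast hd
  by_cases hz : IsZeroSumFree ((WW p S c d).map (psi P c))
  · refine ⟨0, Multiset.zero_le _, Or.inl rfl, ?_⟩
    have h := zsfW hp P hd hc hc2 hz
    have h0 : (0 : ℝ) ≤ crossNum (mrg (0 : Multiset G)) := crossNum_nonneg _
    have : crossNum (WW p S c d) ≤ kap p a1 a2 c * (d : ℝ)⁻¹ := by
      rw [← div_eq_mul_inv, le_div_iff₀ hd']; exact h
    linarith
  · obtain ⟨R, hR, hR0, hs⟩ := exists_zero_of_not_zsf _ _ hz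
    rw [← map_multiset_sum, psi_eq_zero hp P hc] at hs
    refine ⟨R, hR, Or.inr hs, ?_⟩
    have h1 := cross_mrg hp P R hR hR0 hs
    have h2 := bigW hp P hS hd (a2 - c) c (by omega) hc
    have h3 : crossNum (WW p S c d) ≤ (kap p a1 a2 c + ((p : ℝ) ^ c)⁻¹) * (d : ℝ)⁻¹ := by
      rw [← div_eq_mul_inv, le_div_iff₀ hd']
      refine h2.trans ?_
      have : (0 : ℝ) ≤ ((p : ℝ) ^ a2)⁻¹ := by positivity
      unfold kap; linarith
    rw [mul_inv] at h1
    linarith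

lemma S_split (P : PData G p a1 a2 a3 n) (hn : n ≠ 0) (S : Multiset G) (c : ℕ) :
    S = S.filter (fun g => vv p g ≤ c) + ∑ d ∈ n.divisors, WW p S c d := by
  classical
  ext x
  rw [Multiset.count_add, Multiset.count_sum', Multiset.count_filter]
  simp only [WW, Multiset.count_filter]
  by_cases h : vv p x ≤ c
  · rw [if_pos h, Finset.sum_eq_zero]
    · simp
    · intro d _
      rw [if_neg]; omega
  · rw [if_neg h, Finset.sum_eq_single (mm p x)]
    · simp; omega
    · intro d _ hd
      rw [if_neg]
      rintro ⟨_, h'⟩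
      exact hd h'.symm
    · intro hx
      exact absurd (Nat.mem_divisors.2 ⟨P.hn x, hn⟩) hx

lemma star (hp : p.Prime) (P : PData G p a1 a2 a3 n) (hn : n ≠ 0) {S : Multiset G} (hS : IsDense S)
    {c : ℕ} (hc : a3 ≤ c) (hc2 : c ≤ a2) (R1 : Multiset G) (hR1 : R1 ≤ WW p S c 1)
    (hv1 : R1 = 0 ∨ vv p R1.sum ≤ c) :
    kap p a1 a2 c + crossNum (mrg R1) ≤ crossNum (WW p S c 1) +
      kap p a1 a2 c * (∑ d ∈ n.divisors, (d : ℝ)⁻¹ - 1) := by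
  classical
  have h12 := P.h12
  have hex : ∀ d : ℕ, ∃ R, 0 < d → R ≤ WW p S c d ∧ (R = 0 ∨ vv p R.sum ≤ c) ∧
      crossNum (WW p S c d) ≤ crossNum (mrg R) + kap p a1 a2 c * (d : ℝ)⁻¹ := by
    intro d
    by_cases hd : 0 < d
    · obtain ⟨R, h1, h2⟩ := loss hp P hS hd hc hc2
      exact ⟨R, fun _ => ⟨h1, h2⟩⟩
    · exact ⟨0, fun h => absurd h hd⟩
  choose R' hR' using hex
  let R : ℕ → Multiset G := fun d => if d = 1 then R1 else R' d
  have hR1eq : R 1 = R1 := by simp [R]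
  have hRne : ∀ d, d ≠ 1 → R d = R' d := fun d h => by simp [R, h]
  have hRle : ∀ d, 0 < d → R d ≤ WW p S c d ∧ (R d = 0 ∨ vv p (R d).sum ≤ c) := by
    intro d hd
    by_cases h : d = 1
    · subst h; rw [hR1eq]; exact ⟨hR1, hv1⟩
    · rw [hRne d h]; exact ⟨(hR' d hd).1, (hR' d hd).2.1⟩
  have hdpos : ∀ d ∈ n.divisors, 0 < d := fun d hd => Nat.pos_of_mem_divisors hd
  set U := S.filter (fun g => vv p g ≤ c) with hU
  have hsplit := S_split P hn S c
  rw [← hU] at hsplit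
  have hz1 : IsZeroSumFree (U + ∑ d ∈ n.divisors, R d) := by
    apply zsf_mono hS.1
    conv_rhs => rw [hsplit]
    exact add_le_add le_rfl (Finset.sum_le_sum fun d hd => (hRle d (hdpos d hd)).1)
  have hz2 := zsf_mrg_sum R n.divisors U hz1
  set V := U + ∑ d ∈ n.divisors, mrg (R d) with hV
  have hVv : ∀ x ∈ V, psi P c x = 0 := by
    intro x hx
    rw [psi_eq_zero hp P hc]
    rw [hV, Multiset.mem_add, Multiset.mem_sum] at hx
    rcases hx with hx | ⟨d, hd, hx⟩
    · rw [hU, Multiset.mem_filter] at hx; exact hx.2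
    · unfold mrg at hx
      split_ifs at hx with h0
      · simp at hx
      · rw [Multiset.mem_singleton] at hx
        rw [hx]
        exact ((hRle d (hdpos d hd)).2).resolve_left h0
  have hV1 : ∀ x ∈ V, psi1 P c x = 0 := fun x hx => congrArg Prod.fst (hVv x hx)
  have hV2 : ∀ x ∈ V, psi2 P c x = 0 := fun x hx => congrArg Prod.snd (hVv x hx)
  have hone : ∀ a, red p a c 1 = 1 := fun a => by
    have := red_nat p a c 1
    simpa using this
  have hz3 : IsZeroSumFree (V + OO p P.f1 (a1 - c)) :=
    zsf_add (psi1 P c) _ _ hz2 hV1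
      (OO_zsf hp _ _ _ (by simp [psi1, P.h11, hone]))
  have hz4 : IsZeroSumFree (V + OO p P.f1 (a1 - c) + OO p P.f2 (a2 - c)) := by
    refine zsf_add (psi2 P c) _ _ hz3 ?_ (OO_zsf hp _ _ _ (by simp [psi2, P.h22, hone]))
    intro x hx
    rw [Multiset.mem_add] at hx
    rcases hx with hx | hx
    · exact hV2 x hx
    · unfold OO at hx
      rw [Multiset.mem_sum] at hx
      obtain ⟨i, _, hi⟩ := hx
      rw [Multiset.eq_of_mem_replicate hi, map_nsmul]
      simp [psi2, P.h21]
  have hle := dense_max hS _ hz4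
  have hc1 := OO_cross hp P.f1 a1 c P.hf1 (by omega)
  have hc2' := OO_cross hp P.f2 a2 c P.hf2 hc2
  have hSc : crossNum S = crossNum U + ∑ d ∈ n.divisors, crossNum (WW p S c d) := by
    conv_lhs => rw [hsplit]
    rw [crossNum_add, crossNum_sum]
  rw [crossNum_add, crossNum_add, hV, crossNum_add, crossNum_sum, hSc] at hle
  have h1mem : 1 ∈ n.divisors := Nat.one_mem_divisors.2 hn
  rw [← Finset.add_sum_erase _ _ h1mem, ← Finset.add_sum_erase _ _ h1mem, hR1eq] at hle
  rw [← Finset.add_sum_erase _ _ h1mem]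
  have hl : ∑ d ∈ n.divisors.erase 1, crossNum (WW p S c d) ≤
      ∑ d ∈ n.divisors.erase 1, crossNum (mrg (R d)) +
        kap p a1 a2 c * ∑ d ∈ n.divisors.erase 1, (d : ℝ)⁻¹ := by
    rw [Finset.mul_sum, ← Finset.sum_add_distrib]
    apply Finset.sum_le_sum
    intro d hd
    have hd' := Finset.mem_erase.1 hd
    rw [hRne d hd'.1]
    exact (hR' d (hdpos d hd'.2)).2.2
  have hk : kap p a1 a2 c = (((p : ℝ) ^ c)⁻¹ - ((p : ℝ) ^ a1)⁻¹) +
      (((p : ℝ) ^ c)⁻¹ - ((p : ℝ) ^ a2)⁻¹) := by unfold kap; ring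
  have hsimp : kap p a1 a2 c * (((1 : ℕ) : ℝ)⁻¹ + ∑ d ∈ n.divisors.erase 1, (d : ℝ)⁻¹ - 1) =
      kap p a1 a2 c * ∑ d ∈ n.divisors.erase 1, (d : ℝ)⁻¹ := by simp
  rw [hsimp]
  linarith

lemma star' (hp : p.Prime) (P : PData G p a1 a2 a3 n) (hn : n ≠ 0) {S : Multiset G} (hS : IsDense S)
    (hsm : ∑ d ∈ n.divisors, (d : ℝ)⁻¹ < (2 * p + 2 : ℝ) / (2 * p + 1))
    {c : ℕ} (hc : a3 ≤ c) (hc2 : c ≤ a2) (R1 : Multiset G) (hR1 : R1 ≤ WW p S c 1)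
    (hv1 : R1 = 0 ∨ vv p R1.sum ≤ c) :
    kap p a1 a2 c + crossNum (mrg R1) < crossNum (WW p S c 1) + ((p : ℝ) ^ (c + 1))⁻¹ := by
  have hp0 : (0 : ℝ) < p := by exact_mod_cast hp.pos
  have h := star hp P hn hS hc hc2 R1 hR1 hv1
  set σ := ∑ d ∈ n.divisors, (d : ℝ)⁻¹
  have hσ1 : 0 ≤ σ - 1 := by
    have h1 : ((1 : ℕ) : ℝ)⁻¹ ≤ σ := Finset.single_le_sum (f := fun d : ℕ => (d : ℝ)⁻¹)
      (fun d _ => by positivity) (Nat.one_mem_divisors.2 hn)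
    simp at h1
    linarith
  have hσ2 : σ - 1 < 1 / (2 * p + 1) := by
    have : (2 * p + 2 : ℝ) / (2 * p + 1) = 1 + 1 / (2 * p + 1) := by field_simp; ring
    linarith
  have hk : kap p a1 a2 c ≤ 2 * p * ((p : ℝ) ^ (c + 1))⁻¹ := by
    have h1 : (0 : ℝ) ≤ ((p : ℝ) ^ a2)⁻¹ := by positivity
    have h2 : (0 : ℝ) ≤ ((p : ℝ) ^ a1)⁻¹ := by positivity
    unfold kap
    rw [inv_pow_succ hp c]
    linarith
  have hX : (0 : ℝ) < ((p : ℝ) ^ (c + 1))⁻¹ := by positivity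
  have h3 : kap p a1 a2 c * (σ - 1) ≤ 2 * p * ((p : ℝ) ^ (c + 1))⁻¹ * (1 / (2 * p + 1)) := by
    refine (mul_le_mul_of_nonneg_right hk hσ1).trans ?_
    exact mul_le_mul_of_nonneg_left hσ2.le (by positivity)
  have h4 : 2 * p * ((p : ℝ) ^ (c + 1))⁻¹ * (1 / (2 * p + 1)) < ((p : ℝ) ^ (c + 1))⁻¹ := by
    rw [mul_one_div, div_lt_iff₀ (by positivity)]
    nlinarith
  linarith

lemma induct (hp : p.Prime) (P : PData G p a1 a2 a3 n) (hn : n ≠ 0) {S : Multiset G}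
    (hS : IsDense S)
    (hsm : ∑ d ∈ n.divisors, (d : ℝ)⁻¹ < (2 * p + 2 : ℝ) / (2 * p + 1)) :
    ∀ k c, c + k = a2 → a3 ≤ c → crossNum (WW p S c 1) ≤ kap p a1 a2 c := by
  have hp0 : (0 : ℝ) < p := by exact_mod_cast hp.pos
  intro k
  induction k with
  | zero =>
    intro c hc _
    obtain rfl : c = a2 := by omega
    have h12 := P.h12
    have := topW hp P hS one_pos (a1 - c) c (by omega) le_rfl
    unfold kap
    push_cast at this
    linarith
  | succ k ih =>
    intro c hc hc3
    have h1 := ih (c + 1) (by omega) (by omega)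
    have h3 := levA' hp P hS (d := 1) hc3 (by omega)
    have h4 := cross_WW_succ (p := p) S c 1 one_pos
    push_cast at h4
    by_cases hz : IsZeroSumFree ((WW p S c 1).map (psi P c))
    · have := zsfW hp P one_pos hc3 (by omega) hz
      push_cast at this
      linarith
    · exfalso
      obtain ⟨R, hR, hR0, hs⟩ := exists_zero_of_not_zsf _ _ hz
      rw [← map_multiset_sum, psi_eq_zero hp P hc3] at hs
      have h5 := cross_mrg hp P R hR hR0 hs
      have h6 := star' hp P hn hS hsm hc3 (by omega) R hR (Or.inr hs)
      push_cast at h5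
      rw [mul_one] at h5
      have h7 := inv_pow_succ hp c
      unfold kap at h1 h6
      linarith

lemma final (hp : p.Prime) (P : PData G p a1 a2 a3 n) (hn : n ≠ 0) {S : Multiset G}
    (hS : IsDense S)
    (hsm : ∑ d ∈ n.divisors, (d : ℝ)⁻¹ < (2 * p + 2 : ℝ) / (2 * p + 1))
    (c : ℕ) (hc : a3 ≤ c) (hc2 : c + 1 ≤ a2) :
    2 * p - 2 ≤ Multiset.card (lev p S (c + 1) 1) := by
  by_contra hlt
  have hp2 := hp.two_le
  have h1 := induct hp P hn hS hsm (a2 - (c + 1)) (c + 1) (by omega) (by omega)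
  have h2 := star' hp P hn hS hsm hc (by omega) 0 (Multiset.zero_le _) (Or.inl rfl)
  have h3 : (Multiset.card (lev p S (c + 1) 1) : ℝ) ≤ 2 * p - 3 := by
    have : Multiset.card (lev p S (c + 1) 1) + 3 ≤ 2 * p := by omega
    have : (Multiset.card (lev p S (c + 1) 1) : ℝ) + 3 ≤ 2 * p := by exact_mod_cast this
    linarith
  have h4 := cross_WW_succ (p := p) S c 1 one_pos
  push_cast at h4
  have h5 : (0 : ℝ) ≤ ((p : ℝ) ^ (c + 1))⁻¹ := by positivity
  have h6 := mul_le_mul_of_nonneg_right h3 h5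
  have h7 := inv_pow_succ hp c
  have h8 : (0 : ℝ) ≤ crossNum (mrg (0 : Multiset G)) := crossNum_nonneg _
  unfold kap at h1 h2
  linarith

end main

lemma zmod_kill {N m : ℕ} (h : m ∣ N) (x : ZMod m) : N • x = 0 := by
  rw [nsmul_eq_mul, (ZMod.natCast_eq_zero_iff N m).2 h, zero_mul]

lemma zmod_cop {p a c h : ℕ} (hh : Nat.Coprime p h) (x : ZMod (p ^ a))
    (hx : (p ^ c * h) • x = 0) : p ^ c • x = 0 := by
  have h1 : addOrderOf x ∣ p ^ c * h := addOrderOf_dvd_of_nsmul_eq_zero hx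
  have h2 : addOrderOf x ∣ p ^ a := addOrderOf_dvd_of_nsmul_eq_zero (zmod_kill dvd_rfl x)
  have h3 : Nat.Coprime (addOrderOf x) h := Nat.Coprime.coprime_dvd_left h2 (hh.pow_left a)
  exact addOrderOf_dvd_iff_nsmul_eq_zero.1 (h3.dvd_of_dvd_mul_right h1)

lemma exists_pdata
    {G : Type*} [AddCommGroup G] [Finite G] {p : ℕ} (hp : p.Prime)
    (k : ℕ) (a : ℕ → ℕ)
    (hanti : ∀ i j : ℕ, 1 ≤ i → i ≤ j → a j ≤ a i)
    (hzero : ∀ j : ℕ, k < j → a j = 0)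
    {G' : Type*} [AddCommGroup G'] [Finite G'] (hG' : ¬ p ∣ Nat.card G')
    (e : G ≃+ (∀ j : Fin k, ZMod (p ^ a (j.1 + 1))) × G')
    (hgap : a 3 < a 2) :
    AddMonoid.exponent G / p ^ a 1 ≠ 0 ∧
    Nonempty (PData G p (a 1) (a 2) (a 3) (AddMonoid.exponent G / p ^ a 1)) := by
  have hk : 2 ≤ k := by
    by_contra hlt
    have := hzero 2 (by omega)
    omega
  set h := Nat.card G' with hh
  have hcop : Nat.Coprime p h := (Nat.Prime.coprime_iff_not_dvd hp).2 hG'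
  have hh0 : h ≠ 0 := Nat.card_pos.ne'
  let j0 : Fin k := ⟨0, by omega⟩
  let j1 : Fin k := ⟨1, by omega⟩
  have hj : j1 ≠ j0 := by simp [j0, j1]
  let π1 : G →+ ZMod (p ^ a 1) :=
    ((Pi.evalAddMonoidHom (fun j : Fin k => ZMod (p ^ a (j.1 + 1))) j0).comp
      (AddMonoidHom.fst _ G')).comp e.toAddMonoidHom
  let π2 : G →+ ZMod (p ^ a 2) :=
    ((Pi.evalAddMonoidHom (fun j : Fin k => ZMod (p ^ a (j.1 + 1))) j1).comp
      (AddMonoidHom.fst _ G')).comp e.toAddMonoidHom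
  let f1 : G := e.symm (Pi.single j0 1, 0)
  let f2 : G := e.symm (Pi.single j1 1, 0)
  have e1 : ∀ g, π1 g = (e g).1 j0 := fun g => rfl
  have e2 : ∀ g, π2 g = (e g).1 j1 := fun g => rfl
  have h11 : π1 f1 = 1 := by
    rw [e1]; simp only [f1, AddEquiv.apply_symm_apply, Pi.single_eq_same]
  have h21 : π2 f1 = 0 := by
    rw [e2]; simp only [f1, AddEquiv.apply_symm_apply]
    exact Pi.single_eq_of_ne hj _
  have h22 : π2 f2 = 1 := by
    rw [e2]; simp only [f2, AddEquiv.apply_symm_apply, Pi.single_eq_same]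
  have hf : ∀ j : Fin k, p ^ a (j.1 + 1) • e.symm (Pi.single j 1, (0 : G')) = 0 := by
    intro j
    rw [← map_nsmul, Prod.smul_mk, ← Pi.single_smul, zmod_kill dvd_rfl, Pi.single_zero, smul_zero,
      ← Prod.zero_eq_mk, map_zero]
  have kill : ∀ (N : ℕ) (g : G), h ∣ N → (N • g = 0 ↔ ∀ j, N • (e g).1 j = 0) := by
    intro N g hN
    have hG : N • (e g).2 = 0 := by
      obtain ⟨t, rfl⟩ := hN
      rw [mul_comm, mul_nsmul', card_nsmul_eq_zero', smul_zero]
    rw [← map_eq_zero_iff e e.injective, map_nsmul, Prod.ext_iff]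
    constructor
    · rintro ⟨h1, -⟩ j
      exact congrFun h1 j
    · intro h1
      exact ⟨funext h1, hG⟩
  have hall : ∀ g : G, addOrderOf g ∣ p ^ a 1 * h := by
    intro g
    apply addOrderOf_dvd_of_nsmul_eq_zero
    rw [kill _ _ (Dvd.intro_left _ rfl)]
    intro j
    exact zmod_kill (Dvd.dvd.mul_right (pow_dvd_pow _ (hanti _ _ le_rfl (by omega))) _) _
  have hmm : ∀ g : G, mm p g ∣ h := by
    intro g
    have h1 : mm p g ∣ p ^ a 1 * h := (Dvd.intro_left _ (ord_eq p g)).trans (hall g)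
    exact (Nat.Coprime.pow_left (a 1) (mm_coprime hp g)).symm.dvd_of_dvd_mul_left h1
  have hv : ∀ (c : ℕ) (g : G), vv p g ≤ c ↔ (p ^ c * h) • g = 0 := by
    intro c g
    rw [← addOrderOf_dvd_iff_nsmul_eq_zero]
    constructor
    · intro hc
      rw [← ord_eq p g]
      exact Nat.mul_dvd_mul (pow_dvd_pow _ hc) (hmm g)
    · intro hd
      have h1 : p ^ vv p g ∣ p ^ c * h := (Dvd.intro _ (ord_eq p g)).trans hd
      have h2 : p ^ vv p g ∣ p ^ c := (Nat.Coprime.pow_left _ hcop).dvd_of_dvd_mul_right h1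
      exact (Nat.pow_dvd_pow_iff_le_right hp.one_lt).1 h2
  have hexp0 : AddMonoid.exponent G ≠ 0 := AddMonoid.exponent_ne_zero_of_finite
  have hpe : p ^ a 1 ∣ AddMonoid.exponent G := by
    have h1 : AddMonoid.exponent G • f1 = 0 := AddMonoid.exponent_nsmul_eq_zero f1
    have h2 := congrArg π1 h1
    rw [map_nsmul, h11, map_zero, nsmul_one] at h2
    exact (ZMod.natCast_eq_zero_iff _ _).1 h2
  refine ⟨?_, ⟨⟨π1, π2, f1, f2, h11, h21, h22, hf j0, hf j1, ?_, ?_, ?_, hgap.le,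
    hanti _ _ le_rfl (by omega)⟩⟩⟩
  · obtain ⟨t, ht⟩ := hpe
    rw [ht, Nat.mul_div_cancel_left _ (pow_pos hp.pos _)]
    rintro rfl
    exact hexp0 (by simpa using ht)
  · intro c hc g
    rw [hv, kill _ _ (Dvd.intro_left _ rfl), e1, e2]
    constructor
    · rintro ⟨h1, h2⟩ j
      by_cases hj0 : j = j0
      · subst hj0
        rw [mul_comm, mul_nsmul']
        exact (congrArg (h • ·) h1).trans (smul_zero _)
      by_cases hj1 : j = j1
      · subst hj1
        rw [mul_comm, mul_nsmul']
        exact (congrArg (h • ·) h2).trans (smul_zero _)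
      have : 2 ≤ j.1 := by
        have h3 : j.1 ≠ 0 := fun h => hj0 (Fin.ext h)
        have h4 : j.1 ≠ 1 := fun h => hj1 (Fin.ext h)
        omega
      have h5 := hanti 3 (j.1 + 1) (by omega) (by omega)
      exact zmod_kill (Dvd.dvd.mul_right (pow_dvd_pow _ (h5.trans hc)) _) _
    · intro h1
      exact ⟨zmod_cop hcop _ (h1 j0), zmod_cop hcop _ (h1 j1)⟩
  · intro g
    rw [hv]
    exact addOrderOf_dvd_iff_nsmul_eq_zero.1 (hall g)
  · intro g
    have h1 : mm p g ∣ AddMonoid.exponent G :=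
      (Dvd.intro_left _ (ord_eq p g)).trans (AddMonoid.addOrder_dvd_exponent g)
    rw [← Nat.mul_div_cancel' hpe] at h1
    exact (Nat.Coprime.pow_left (a 1) (mm_coprime hp g)).symm.dvd_of_dvd_mul_left h1


/-- (2-Replacement lemma) Let `p` be a prime dividing `|G|`, and write the `p`-Sylow
subgroup of `G` as `C_{p^{a_1}} ⊕ ⋯ ⊕ C_{p^{a_k}}` with `a_1 ≥ ⋯ ≥ a_k ≥ 1` (and
`a_j = 0` for `j > k`), i.e. `G ≅ (⨁_{j=1}^k C_{p^{a_j}}) ⊕ G'` with `p ∤ |G'|`.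
Suppose `a_2 > a_3`, let `a_3 + 1 ≤ a ≤ a_2`, and suppose `p` is 2-small with respect
to `exp(G)/p^{a_1}`. Then a dense zero-sum free sequence `S` over `G` contains at
least `2p - 2` elements of order `p^a`. -/
theorem two_replacement_lemma
    (G : Type*) [AddCommGroup G] [Finite G] (p : ℕ) (hp : p.Prime)
    (hpG : p ∣ Nat.card G)
    (k : ℕ) (a : ℕ → ℕ)
    (hanti : ∀ i j : ℕ, 1 ≤ i → i ≤ j → a j ≤ a i)
    (hpos : ∀ j : ℕ, 1 ≤ j → j ≤ k → 1 ≤ a j)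
    (hzero : ∀ j : ℕ, k < j → a j = 0)
    (G' : Type*) [AddCommGroup G'] [Finite G'] (hG' : ¬ p ∣ Nat.card G')
    (e : G ≃+ (∀ j : Fin k, ZMod (p ^ a (j.1 + 1))) × G')
    (hgap : a 3 < a 2)
    (b : ℕ) (hb1 : a 3 + 1 ≤ b) (hb2 : b ≤ a 2)
    (h2 : TwoSmall p (AddMonoid.exponent G / p ^ a 1))
    (S : Multiset G) (hS : IsDense S) :
    2 * p - 2 ≤ Multiset.card (S.filter fun g => addOrderOf g = p ^ b) := by
  obtain ⟨hn, ⟨P⟩⟩ := exists_pdata hp k a hanti hzero hG' e hgap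
  have hsm : ∑ d ∈ (AddMonoid.exponent G / p ^ a 1).divisors, (d : ℝ)⁻¹
      < (2 * p + 2 : ℝ) / (2 * p + 1) := by
    have h3 := h2.2
    have h4 : ((∑ d ∈ (AddMonoid.exponent G / p ^ a 1).divisors, (1 : ℚ) / d : ℚ) : ℝ)
      < (((2 * p + 2 : ℚ) / (2 * p + 1) : ℚ) : ℝ) := by exact_mod_cast h3
    push_cast at h4
    simpa only [one_div] using h4
  have h5 := final hp P hn hS hsm (b - 1) (by omega) (by omega)
  rw [show b - 1 + 1 = b by omega] at h5
  refine h5.trans (Multiset.card_le_card ?_)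
  rw [Multiset.le_filter]
  refine ⟨by unfold lev; exact Multiset.filter_le _ _, fun x hx => ?_⟩
  obtain ⟨-, h6, h7⟩ := mem_lev.1 hx
  rw [← ord_eq p x, h6, h7, mul_one]
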